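/- Let g, C, B⁻, B⁺, Ẋ, Ẏ, n_x, n_y, α be arbitrary real numbers, and suppose the interior and exterior traces satisfy the lake-at-rest conditions η⁻ = η⁺ = C, m⁻ = m⁺ = 0, w⁻ = w⁺ = 0, with water depths h± = η± − B± = C − B±. Then the well-balanced numerical flux reduces exactly to the interior flux: Ĥ* = Hn(η⁻, m⁻, w⁻, h⁻) = Hn(C, 0, 0, C − B⁻). -/

import Mathlib

/-- The ALE shallow-water flux in the variables `(η, m, w)` with water depth `h`,
dotted with the direction `(nx, ny)`, for mesh velocity `(Xd, Yd)`. -/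
noncomputable def Hflux (g Xd Yd nx ny η m w h : ℝ) : ℝ × ℝ × ℝ :=
  ( m * nx + w * ny - (Xd * nx + Yd * ny) * η,
    (m ^ 2 / h + g / 2 * (2 * h * η - η ^ 2)) * nx + m * w / h * ny - (Xd * nx + Yd * ny) * m,
    m * w / h * nx + (w ^ 2 / h + g / 2 * (2 * h * η - η ^ 2)) * ny - (Xd * nx + Yd * ny) * w )

/-- At the lake-at-rest steady state, the well-balanced numerical flux `Ĥ*`
(hydrostatic reconstruction + global Lax–Friedrichs + correction term)
reduces exactly to the interior flux `Hn(C, 0, 0, C - B⁻)`. -/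
theorem wellBalanced_flux_reduces_to_interior_flux
    (g C Bm Bp Xd Yd nx ny α : ℝ)
    (ηm ηp mm mp wm wp hm hp : ℝ)
    (hηm : ηm = C) (hηp : ηp = C)
    (hmm : mm = 0) (hmp : mp = 0)
    (hwm : wm = 0) (hwp : wp = 0)
    (hhm : hm = ηm - Bm) (hhp : hp = ηp - Bp) :
    let hsm : ℝ := max 0 (ηm - max Bm Bp)
    let hsp : ℝ := max 0 (ηp - max Bm Bp)
    let msm : ℝ := hsm / hm * mm
    let msp : ℝ := hsp / hp * mp
    let wsm : ℝ := hsm / hm * wm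
    let wsp : ℝ := hsp / hp * wp
    (1 / 2 : ℝ) • (Hflux g Xd Yd nx ny ηm msm wsm hsm + Hflux g Xd Yd nx ny ηp msp wsp hsp)
        - (α / 2) • ((ηp, msp, wsp) - (ηm, msm, wsm))
        + (0, g * ηm * (hm - hsm) * nx, g * ηm * (hm - hsm) * ny)
      = Hflux g Xd Yd nx ny C 0 0 (C - Bm) := by
  subst hηm hηp hmm hmp hwm hwp hhm hhp
  intro hsm hsp msm msp wsm wsp
  have hs : hsp = hsm := rfl
  simp only [msm, msp, wsm, wsp, hs, mul_zero, sub_self, smul_zero, sub_zero, Hflux]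
  ext <;> simp only [Prod.fst_add, Prod.snd_add, Prod.smul_fst, Prod.smul_snd,
    smul_eq_mul] <;> ring
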